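/- (Blow-up size reduction.) For all positive integers n and d there exists a natural number N such that the following holds. Let F be a field with |F| ≥ N, let B ≤ M(n,F) be a matrix space, and suppose d > n + 1. If the (d,d)-blow-up B^{(d,d)} contains a matrix of rank dn, then the (d−1, d−1)-blow-up B^{(d−1,d−1)} contains a matrix of rank (d−1)n. -/

import Mathlib

open Matrix Kronecker

/-- The (k,ℓ)-blow-up of a matrix space `B ≤ M(n,F)`. -/
def blowUp {F : Type} [Field F] {n : ℕ} (B : Submodule F (Matrix (Fin n) (Fin n) F))
    (k ℓ : ℕ) : Submodule F (Matrix (Fin n × Fin k) (Fin n × Fin ℓ) F) :=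
  Submodule.span F {M | ∃ A ∈ B, ∃ T : Matrix (Fin k) (Fin ℓ) F, M = A ⊗ₖ T}

/-!
A matrix of maximal rank in `B^{(k,k)}` over a large field has rank divisible by `k`. To see this,
extend scalars to a field `K` for which `M(k,K)` contains a division algebra `D` over an infinite
subfield `L`, with `K`-span all of `M(k,K)`: a cyclic algebra over a rational function field. An
`n × n` matrix over `D` has `D`-rank `r`, hence rank `r k` as a matrix over `K`. Since the
nonvanishing of a minor is a polynomial condition, ranks attained in the `K`-span of a space over a
large subfield are attained in the space itself. Hence the maximal rank in `B^{(k,k)}` is also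
attained by a matrix with blocks in `D`.

Deleting one row and one column from every block of a matrix of rank `d n` in `B^{(d,d)}` lowers the
rank by at most `2n`, so the maximal rank in `B^{(d-1,d-1)}` is at least
`(d - 1) n - n > (d - 1) (n - 1)`, and by divisibility it is `(d - 1) n`.
-/

section RankFactorization

theorem comp_map_mul {l m n κ R S : Type*} [Fintype m] [Fintype κ] [DecidableEq κ]
    [NonAssocSemiring S] [NonAssocSemiring R] (φ : S →+* Matrix κ κ R) (M : Matrix l m S)
    (N : Matrix m n S) :
    Matrix.comp l n κ κ R ((M * N).map φ) =
      Matrix.comp l m κ κ R (M.map φ) * Matrix.comp m n κ κ R (N.map φ) := by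
  ext
  simp [Matrix.mul_apply, Matrix.sum_apply, Fintype.sum_prod_type]

variable {m n κ D K : Type*} [Fintype n] [Field K]

theorem exists_rank_factorization [Fintype m] [DivisionRing D] (A : Matrix m n D) :
    ∃ (r : ℕ) (P : Matrix m (Fin r) D) (Q : Matrix (Fin r) n D) (P' : Matrix (Fin r) m D)
      (Q' : Matrix n (Fin r) D), A = P * Q ∧ P' * P = 1 ∧ Q * Q' = 1 := by
  classical
  let f : (m → D) →ₗ[D] (n → D) := A.toLinearMapRight'
  let e := (Module.finBasis D f.range).equivFun
  let p : (m → D) →ₗ[D] (Fin (Module.finrank D f.range) → D) := e ∘ₗ f.rangeRestrict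
  let q : (Fin (Module.finrank D f.range) → D) →ₗ[D] (n → D) := f.range.subtype ∘ₗ e.symm
  have hqp : q ∘ₗ p = f := by ext; simp [p, q]
  obtain ⟨p', hp'⟩ := p.exists_rightInverse_of_surjective
    (LinearMap.range_eq_top.2 (e.surjective.comp f.surjective_rangeRestrict))
  obtain ⟨q', hq'⟩ := q.exists_leftInverse_of_injective
    (LinearMap.ker_eq_bot.2 (f.range.injective_subtype.comp e.symm.injective))
  refine ⟨_, p.toMatrixRight', q.toMatrixRight', p'.toMatrixRight', q'.toMatrixRight', ?_, ?_, ?_⟩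
  · rw [← LinearMap.toMatrixRight'_comp, hqp]
    exact (LinearMap.toMatrixRight'.apply_symm_apply A).symm
  · rw [← LinearMap.toMatrixRight'_comp, hp', LinearMap.toMatrixRight'_id]
  · rw [← LinearMap.toMatrixRight'_comp, hq', LinearMap.toMatrixRight'_id]

theorem rank_mul_eq_card_of_mul_eq_one [Fintype m] [Fintype κ] [DecidableEq κ]
    {P : Matrix m κ K} {Q : Matrix κ n K} {P' : Matrix κ m K} {Q' : Matrix n κ K} (hP : P' * P = 1)
    (hQ : Q * Q' = 1) : (P * Q).rank = Fintype.card κ := by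
  refine le_antisymm ((Matrix.rank_mul_le_left P Q).trans P.rank_le_card_width) ?_
  calc Fintype.card κ = (P' * (P * Q) * Q').rank := by
        rw [← Matrix.mul_assoc, hP, Matrix.one_mul, hQ, Matrix.rank_one]
    _ ≤ (P * Q).rank := (Matrix.rank_mul_le_left _ _).trans (Matrix.rank_mul_le_right _ _)

theorem exists_mul_mul_eq_one [Fintype m] (A : Matrix m n K) :
    ∃ (P : Matrix (Fin A.rank) m K) (Q : Matrix n (Fin A.rank) K), P * A * Q = 1 := by
  obtain ⟨r, P, Q, P', Q', rfl, hP, hQ⟩ := exists_rank_factorization A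
  rw [rank_mul_eq_card_of_mul_eq_one hP hQ, Fintype.card_fin]
  exact ⟨P', Q', by rw [← Matrix.mul_assoc, hP, Matrix.one_mul, hQ]⟩

theorem rank_map_eq_rank [Finite m] {L : Type*} [Field L] (f : L →+* K) (A : Matrix m n L) :
    (A.map f).rank = A.rank := by
  have := Fintype.ofFinite m
  obtain ⟨r, P, Q, P', Q', rfl, hP, hQ⟩ := exists_rank_factorization A
  have map_one : (1 : Matrix (Fin r) (Fin r) L).map f = 1 :=
    Matrix.map_one _ (map_zero f) (_root_.map_one f)
  rw [Matrix.map_mul, rank_mul_eq_card_of_mul_eq_one hP hQ, rank_mul_eq_card_of_mul_eq_one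
    (by rw [← Matrix.map_mul, hP, map_one]) (by rw [← Matrix.map_mul, hQ, map_one])]

theorem card_dvd_rank_comp_map [Finite m] [Fintype κ] [DecidableEq κ] [DivisionRing D]
    (φ : D →+* Matrix κ κ K) (A : Matrix m n D) :
    Fintype.card κ ∣ (Matrix.comp m n κ κ K (A.map φ)).rank := by
  have := Fintype.ofFinite m
  obtain ⟨r, P, Q, P', Q', rfl, hP, hQ⟩ := exists_rank_factorization A
  have comp_map_one :
      Matrix.comp (Fin r) (Fin r) κ κ K ((1 : Matrix (Fin r) (Fin r) D).map φ) = 1 := by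
    rw [Matrix.map_one _ (map_zero φ) (map_one φ), Matrix.comp_one]
  rw [comp_map_mul, rank_mul_eq_card_of_mul_eq_one
    (by rw [← comp_map_mul, hP, comp_map_one]) (by rw [← comp_map_mul, hQ, comp_map_one]),
    Fintype.card_prod]
  exact dvd_mul_left _ _

theorem card_dvd_rank_comp_map_val {L K κ m n : Type*} [Field L] [Field K] [Algebra L K]
    [FiniteDimensional L K] [Fintype κ] [DecidableEq κ] [Nonempty κ] [Finite m] [Fintype n]
    {D : Subalgebra L (Matrix κ κ K)} (hD : ∀ X ∈ D, X ≠ 0 → X.det ≠ 0) (N : Matrix m n D) :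
    Fintype.card κ ∣ (Matrix.comp m n κ κ K (N.map D.val)).rank := by
  have : NoZeroDivisors D := ⟨fun {X Y} hXY => by
    by_contra! h
    refine mul_ne_zero (hD X X.2 (Subtype.coe_ne_coe.2 h.1))
      (hD Y Y.2 (Subtype.coe_ne_coe.2 h.2)) ?_
    rw [← Matrix.det_mul, ← D.coe_mul, hXY, D.coe_zero, Matrix.det_zero]⟩
  have : IsDomain D := NoZeroDivisors.to_isDomain D
  let := divisionRingOfFiniteDimensional L D
  exact card_dvd_rank_comp_map (D.val : D →+* Matrix κ κ K) N

end RankFactorization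

section RankOfSpan

variable {L K : Type*} [Field L] [Field K] [Algebra L K]

theorem exists_mem_det_add_smul_ne_zero {ι R : Type*} [Fintype ι] [DecidableEq ι] [CommRing R]
    [IsDomain R] {s : Finset R} (hs : Fintype.card ι < s.card) {M A : Matrix ι ι R} {c : R}
    (h : (M + c • A).det ≠ 0) : ∃ a ∈ s, (M + a • A).det ≠ 0 := by
  let p : Polynomial R :=
    ((Polynomial.X : Polynomial R) • A.map Polynomial.C + M.map Polynomial.C).det
  have eval_p (x : R) : p.eval x = (M + x • A).det := by
    rw [← Polynomial.coe_evalRingHom, RingHom.map_det]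
    congr 1
    ext i j
    simp [add_comm, mul_comm x]
  by_contra! hzero
  have hp : p = 0 := Polynomial.eq_zero_of_natDegree_lt_card_of_eval_eq_zero' p s
    (fun a ha => (eval_p a).trans (hzero a ha))
    ((Polynomial.natDegree_det_X_add_C_le A M).trans_lt hs)
  exact h (by rw [← eval_p, hp, Polynomial.eval_zero])

-- In a `K`-linear combination of elements of `W`, the coefficients are replaced by elements of `L`
-- one at a time, each avoiding the roots of the determinant as a polynomial in that coefficient.
theorem exists_mem_det_ne_zero_of_mem_span {ι : Type*} [Fintype ι] [DecidableEq ι]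
    (hL : (Fintype.card ι : Cardinal) < Cardinal.mk L) {W : Submodule L (Matrix ι ι K)}
    {A : Matrix ι ι K} (hA : A ∈ Submodule.span K (W : Set (Matrix ι ι K))) (hdet : A.det ≠ 0) :
    ∃ M ∈ W, M.det ≠ 0 := by
  obtain ⟨s, hs⟩ := Cardinal.exists_finset_le_card L (Fintype.card ι + 1)
    (by exact_mod_cast Order.succ_le_of_lt hL)
  suffices H : ∀ (c : K) (M : Matrix ι ι K), (M + c • A).det ≠ 0 → ∃ w ∈ W, (M + w).det ≠ 0 by
    simpa using H 1 0 (by simpa using hdet)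
  clear hdet
  induction hA using Submodule.span_induction with
  | mem w hw =>
    intro c M h
    obtain ⟨_, ha, h⟩ := exists_mem_det_add_smul_ne_zero
      (s := s.map ⟨algebraMap L K, (algebraMap L K).injective⟩) (by rwa [Finset.card_map]) h
    obtain ⟨a, -, rfl⟩ := Finset.mem_map.1 ha
    exact ⟨a • w, W.smul_mem a hw, by rwa [← algebraMap_smul K a w]⟩
  | zero => exact fun c M h => ⟨0, W.zero_mem, by simpa using h⟩
  | add x y _ _ hx hy =>
    intro c M h
    obtain ⟨w, hw, h⟩ := hx c (M + c • y) (by rwa [add_assoc, ← smul_add, add_comm y])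
    obtain ⟨w', hw', h⟩ := hy c (M + w) (by rwa [add_right_comm])
    exact ⟨w + w', W.add_mem hw hw', by rwa [← add_assoc]⟩
  | smul b x _ hx => exact fun c M h => hx (c * b) M (by rwa [smul_smul] at h)

theorem exists_mem_rank_le_of_mem_span {m n : Type*} [Finite m] [Fintype n]
    {W : Submodule L (Matrix m n K)} {A : Matrix m n K}
    (hL : (A.rank : Cardinal) < Cardinal.mk L)
    (hA : A ∈ Submodule.span K (W : Set (Matrix m n K))) : ∃ M ∈ W, A.rank ≤ M.rank := by
  have := Fintype.ofFinite m
  obtain ⟨P, Q, hPQ⟩ := exists_mul_mul_eq_one A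
  let φ : Matrix m n K →ₗ[K] Matrix (Fin A.rank) (Fin A.rank) K :=
    { toFun := fun M => P * M * Q
      map_add' := fun M N => by rw [Matrix.mul_add, Matrix.add_mul]
      map_smul' := fun c M => by rw [Matrix.mul_smul, Matrix.smul_mul, RingHom.id_apply] }
  have hφA : φ A ∈ Submodule.span K (W.map (φ.restrictScalars L) : Set _) := by
    have h := Submodule.mem_map_of_mem (f := φ) hA
    rwa [Submodule.map_span] at h
  obtain ⟨_, ⟨M, hM, rfl⟩, hdet⟩ := exists_mem_det_ne_zero_of_mem_span
    (by rwa [Fintype.card_fin]) hφA (by simp [φ, hPQ])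
  refine ⟨M, hM, ?_⟩
  calc A.rank = (P * M * Q).rank :=
        ((Matrix.rank_of_det_ne_zero hdet).trans (Fintype.card_fin _)).symm
    _ ≤ M.rank := (Matrix.rank_mul_le_left _ _).trans (Matrix.rank_mul_le_right _ _)

theorem span_range_map_algebraMap (F K : Type*) {m n : Type*} [Finite m] [Finite n] [Field F]
    [Field K] [Algebra F K] :
    Submodule.span K (Set.range fun T : Matrix m n F => T.map (algebraMap F K)) = ⊤ := by
  classical
  have := Fintype.ofFinite m
  have := Fintype.ofFinite n
  rw [eq_top_iff]
  intro X _
  rw [Matrix.matrix_eq_sum_single X]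
  refine Submodule.sum_mem _ fun i _ => Submodule.sum_mem _ fun j _ => ?_
  have h := Submodule.smul_mem _ (X i j) (Submodule.subset_span (R := K) (Set.mem_range_self
    (f := fun T : Matrix m n F => T.map (algebraMap F K)) (Matrix.single i j 1)))
  simpa [Matrix.smul_single] using h

end RankOfSpan

theorem exists_forall_rank_le {K m n : Type*} [CommRing K] [StrongRankCondition K] [Fintype n]
    {V : Set (Matrix m n K)} (hV : V.Nonempty) : ∃ A ∈ V, ∀ M ∈ V, M.rank ≤ A.rank := by
  have hbdd : BddAbove (Matrix.rank '' V) :=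
    ⟨Fintype.card n, Set.forall_mem_image.2 fun M _ => M.rank_le_card_width⟩
  obtain ⟨A, hA, hsup⟩ := Nat.sSup_mem (hV.image Matrix.rank) hbdd
  exact ⟨A, hA, fun M hM => hsup ▸ le_csSup hbdd (Set.mem_image_of_mem _ hM)⟩

section Deletion

variable {K m n m' n' : Type*} [Field K] [Fintype m] [Fintype n] [Fintype m'] [Fintype n']

theorem rank_add_card_le_rank_submatrix_add_card (A : Matrix m n K) {r : m' → m}
    (hr : Function.Injective r) :
    A.rank + Fintype.card m' ≤ (A.submatrix r id).rank + Fintype.card m := by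
  let π : (m → K) →ₗ[K] (m' → K) := LinearMap.funLeft K K r
  have hπ : Function.Surjective π := LinearMap.funLeft_surjective_of_injective K K r hr
  have hker := π.finrank_range_add_finrank_ker
  have hrank := (π.domRestrict A.mulVecLin.range).finrank_range_add_finrank_ker
  rw [LinearMap.range_domRestrict, ← LinearMap.range_comp] at hrank
  rw [LinearMap.range_eq_top.2 hπ, finrank_top, Module.finrank_fintype_fun_eq_card,
    Module.finrank_fintype_fun_eq_card] at hker
  have hle : Module.finrank K (π.domRestrict A.mulVecLin.range).ker ≤ Module.finrank K π.ker := by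
    rw [LinearMap.ker_domRestrict]
    exact (Submodule.finrank_map_subtype_eq _ _).symm.trans_le
      (Submodule.finrank_mono (Submodule.map_comap_le _ _))
  have hA : (A.submatrix r id).rank = Module.finrank K (π ∘ₗ A.mulVecLin).range := rfl
  have : A.rank = Module.finrank K A.mulVecLin.range := rfl
  omega

theorem rank_add_card_add_card_le (A : Matrix m n K) {r : m' → m} {c : n' → n}
    (hr : Function.Injective r) (hc : Function.Injective c) :
    A.rank + Fintype.card m' + Fintype.card n' ≤
      (A.submatrix r c).rank + Fintype.card m + Fintype.card n := by
  have hrows := rank_add_card_le_rank_submatrix_add_card A hr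
  have hcols := rank_add_card_le_rank_submatrix_add_card (A.submatrix r id)ᵀ hc
  rw [Matrix.rank_transpose] at hcols
  have : ((A.submatrix r id)ᵀ.submatrix c id).rank = (A.submatrix r c).rank :=
    Matrix.rank_transpose (A.submatrix r c)
  omega

end Deletion

theorem valuation_det_eq_prod {ι R Γ₀ : Type*} [Fintype ι] [DecidableEq ι] [CommRing R]
    [LinearOrderedCommGroupWithZero Γ₀] (v : Valuation R Γ₀) {X : Matrix ι ι R} {a b : ι → Γ₀}
    (ha : ∀ i, a i ≠ 0) (hb : ∀ i, b i ≠ 0) (σ : Equiv.Perm ι)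
    (heq : ∀ i, v (X (σ i) i) = a (σ i) * b i) (hlt : ∀ i j, i ≠ σ j → v (X i j) < a i * b j) :
    v X.det = ∏ i, v (X (σ i) i) := by
  have prod_bound (π : Equiv.Perm ι) : ∏ i, a (π i) * b i = (∏ i, a i) * ∏ i, b i := by
    rw [Finset.prod_mul_distrib, Equiv.prod_comp]
  have v_term (π : Equiv.Perm ι) :
      v ((Equiv.Perm.sign π : ℤ) * ∏ i, X (π i) i) = ∏ i, v (X (π i) i) := by
    rcases Int.units_eq_one_or (Equiv.Perm.sign π) with h | h <;> simp [h]
  have v_term_σ : ∏ i, v (X (σ i) i) = (∏ i, a i) * ∏ i, b i := by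
    simp only [heq, prod_bound]
  have hne : ∏ i, v (X (σ i) i) ≠ 0 :=
    Finset.prod_ne_zero_iff.2 fun i _ => heq i ▸ mul_ne_zero (ha _) (hb i)
  have v_term_lt (π : Equiv.Perm ι) (hπ : π ≠ σ) : ∏ i, v (X (π i) i) < ∏ i, v (X (σ i) i) := by
    by_cases h0 : ∃ i, v (X (π i) i) = 0
    · obtain ⟨i, hi⟩ := h0
      rw [Finset.prod_eq_zero (Finset.mem_univ i) hi]
      exact zero_lt_iff.2 hne
    · push Not at h0
      obtain ⟨j, hj⟩ : ∃ j, π j ≠ σ j := by simpa [Equiv.ext_iff] using hπ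
      rw [v_term_σ, ← prod_bound π]
      refine Finset.prod_lt_prod (fun i _ => zero_lt_iff.2 (h0 i)) (fun i _ => ?_)
        ⟨j, Finset.mem_univ j, hlt _ _ hj⟩
      rcases eq_or_ne (π i) (σ i) with h | h
      · rw [h, heq]
      · exact (hlt _ _ h).le
  rw [Matrix.det_apply', ← Finset.add_sum_erase _ _ (Finset.mem_univ σ),
    Valuation.map_add_eq_of_lt_left, v_term]
  rw [v_term]
  exact v.map_sum_lt hne fun π hπ => (v_term π).trans_lt (v_term_lt π (Finset.ne_of_mem_erase hπ))

theorem single_diag_mem_of_diagonal_mem {ι K : Type*} [Fintype ι] [DecidableEq ι] [Field K]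
    {S : Subalgebra K (Matrix ι ι K)} {x : ι → K} (hinj : Function.Injective x)
    (hx : Matrix.diagonal x ∈ S) (i : ι) : Matrix.single i i 1 ∈ S := by
  have hp : Polynomial.aeval x (Lagrange.basis Finset.univ x i) = Pi.single i 1 := by
    ext j
    rw [Polynomial.aeval_pi_apply]
    rcases eq_or_ne i j with rfl | hij
    · simp [Lagrange.eval_basis_self hinj.injOn]
    · simp [hij.symm, Lagrange.eval_basis_of_ne hij]
  have hle : Algebra.adjoin K {x} ≤ S.comap (Matrix.diagonalAlgHom K) :=
    Algebra.adjoin_le (Set.singleton_subset_iff.2 hx)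
  have h := hle (Polynomial.aeval_mem_adjoin_singleton K x (p := Lagrange.basis Finset.univ x i))
  rw [hp] at h
  simpa [Matrix.diagonal_single] using h

/-- The `(m + 1) × (m + 1)` companion matrix with ones above the diagonal and the entry `t` in the
lower left corner, so that its `(m + 1)`-st power is the scalar matrix `t`. Indices are cyclic:
`Fin.last m + 1 = 0`. -/
def cyclicShift {R : Type*} [Zero R] [One R] (m : ℕ) (t : R) :
    Matrix (Fin (m + 1)) (Fin (m + 1)) R :=
  Matrix.of fun i j => if j = i + 1 then (if i = Fin.last m then t else 1) else 0

/-- The cyclic algebra of degree `m + 1` attached to an endomorphism `τ` of `K` and an element `t`,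
realised as the matrices over `K` on which `τ`, applied entrywise, acts as conjugation by the cyclic
shift. -/
def cyclicAlgebra {L K : Type*} [CommRing L] [CommRing K] [Algebra L K] (m : ℕ) (τ : K →ₐ[L] K)
    (t : K) : Subalgebra L (Matrix (Fin (m + 1)) (Fin (m + 1)) K) where
  carrier := {X | τ.mapMatrix X * cyclicShift m t = cyclicShift m t * X}
  mul_mem' {X Y} hX hY := by
    rw [Set.mem_ofPred_eq] at hX hY ⊢
    rw [map_mul, mul_assoc, hY, ← mul_assoc, hX, mul_assoc]
  add_mem' {X Y} hX hY := by
    rw [Set.mem_ofPred_eq] at hX hY ⊢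
    rw [map_add, add_mul, hX, hY, mul_add]
  algebraMap_mem' c := by
    rw [Set.mem_ofPred_eq, AlgHom.commutes, Algebra.commutes]

namespace cyclicAlgebra

section CommRing

variable {L K : Type*} [CommRing L] [CommRing K] [Algebra L K] {m : ℕ} {τ : K →ₐ[L] K} {t : K}
  {X : Matrix (Fin (m + 1)) (Fin (m + 1)) K}

theorem mem_iff :
    X ∈ cyclicAlgebra m τ t ↔ τ.mapMatrix X * cyclicShift m t = cyclicShift m t * X :=
  Iff.rfl

theorem apply_add_one_add_one (hX : X ∈ cyclicAlgebra m τ t) (i j : Fin (m + 1)) :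
    (if i = Fin.last m then t else 1) * X (i + 1) (j + 1) =
      τ (X i j) * if j = Fin.last m then t else 1 := by
  have h := congrFun (congrFun (mem_iff.1 hX) i) (j + 1)
  simpa [Matrix.mul_apply, cyclicShift, eq_comm] using h.symm

theorem cyclicShift_mem (ht : τ t = t) : cyclicShift m t ∈ cyclicAlgebra m τ t := by
  have h : τ.mapMatrix (cyclicShift m t) = cyclicShift m t := by
    ext i j
    simp [cyclicShift, apply_ite τ, ht]
  rw [mem_iff, h]

theorem diagonal_mem {x : Fin (m + 1) → K} (hx : ∀ i, τ (x i) = x (i + 1)) :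
    Matrix.diagonal x ∈ cyclicAlgebra m τ t := by
  rw [mem_iff]
  ext i j
  rcases eq_or_ne j (i + 1) with rfl | h
  · simp [cyclicShift, Matrix.diagonal_map, hx, mul_comm]
  · simp [cyclicShift, Matrix.diagonal_map, h]

end CommRing

section Valuation

variable {L K Γ₀ : Type*} [CommRing L] [Field K] [Algebra L K]
  [LinearOrderedCommGroupWithZero Γ₀] {m : ℕ} {τ : K →ₐ[L] K} {t : K} {v : Valuation K Γ₀} {γ : Γ₀}
  {X : Matrix (Fin (m + 1)) (Fin (m + 1)) K}

/-- The valuation of the `(i, j)` entry of `X`, corrected so as to be constant along the cyclic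
diagonals of the elements of `cyclicAlgebra m τ t` when `v` is `τ`-invariant. Here `γ` plays the
role of the value of an `(m + 1)`-st root of `t`. -/
def weight (v : Valuation K Γ₀) (γ : Γ₀) (X : Matrix (Fin (m + 1)) (Fin (m + 1)) K)
    (i j : Fin (m + 1)) : Γ₀ :=
  v (X i j) * γ ^ (j : ℕ) / γ ^ (i : ℕ)

theorem weight_add_one_add_one (hγ : γ ≠ 0) (hvt : v t = γ ^ (m + 1)) (hvτ : ∀ x, v (τ x) = v x)
    (hX : X ∈ cyclicAlgebra m τ t) (i j : Fin (m + 1)) :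
    weight v γ X (i + 1) (j + 1) = weight v γ X i j := by
  let u (k : Fin (m + 1)) := v (if k = Fin.last m then t else 1)
  have u_ne_zero (k : Fin (m + 1)) : u k ≠ 0 := by
    simp only [u]
    split_ifs <;> simp [hvt, hγ]
  have pow_val_add_one (k : Fin (m + 1)) :
      γ ^ ((k + 1 : Fin (m + 1)) : ℕ) = γ ^ ((k : ℕ) + 1) / u k := by
    rw [eq_div_iff (u_ne_zero k)]
    simp only [u, Fin.val_add_one]
    split_ifs with h <;> simp [hvt, h]
  have entry_eq : v (X (i + 1) (j + 1)) = v (X i j) * u j / u i := by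
    rw [eq_div_iff (u_ne_zero i), mul_comm]
    simpa only [map_mul, hvτ] using congrArg v (apply_add_one_add_one hX i j)
  have := u_ne_zero i
  have := u_ne_zero j
  rw [weight, weight, entry_eq, pow_val_add_one, pow_val_add_one, pow_succ, pow_succ]
  field_simp

theorem weight_add_add (hγ : γ ≠ 0) (hvt : v t = γ ^ (m + 1)) (hvτ : ∀ x, v (τ x) = v x)
    (hX : X ∈ cyclicAlgebra m τ t) (i j a : Fin (m + 1)) :
    weight v γ X (i + a) (j + a) = weight v γ X i j := by
  induction a using Fin.induction with
  | zero => simp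
  | succ a ih =>
    rw [← Fin.coeSucc_eq_succ, ← add_assoc, ← add_assoc, weight_add_one_add_one hγ hvt hvτ hX, ih]

theorem eq_of_weight_eq_weight (hγ : γ ≠ 0) (hram : ∀ x, ∀ k ∈ Set.Icc 1 m, v x ≠ γ ^ k)
    {i i' j : Fin (m + 1)} (h : weight v γ X i j = weight v γ X i' j)
    (h0 : weight v γ X i j ≠ 0) : i = i' := by
  wlog hlt : i < i' generalizing i i'
  · rcases (not_lt.1 hlt).eq_or_lt with heq | hlt'
    · exact heq.symm
    · exact (this h.symm (h ▸ h0) hlt').symm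
  have hv : v (X i j) ≠ 0 := by
    rintro hv
    simp [weight, hv] at h0
  refine absurd ?_ (hram (X i' j / X i j) (i' - i) ⟨by omega, by omega⟩)
  rw [map_div₀, pow_sub₀ _ hγ hlt.le, div_eq_iff hv]
  simp only [weight] at h
  field_simp at h ⊢
  exact h.symm

-- The entries of maximal weight fill exactly one cyclic diagonal, so the product of that diagonal
-- dominates the other terms of the Leibniz expansion.
theorem det_ne_zero (hγ : γ ≠ 0) (hram : ∀ x, ∀ k ∈ Set.Icc 1 m, v x ≠ γ ^ k)
    (hvt : v t = γ ^ (m + 1)) (hvτ : ∀ x, v (τ x) = v x)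
    (hX : X ∈ cyclicAlgebra m τ t) (hX0 : X ≠ 0) : X.det ≠ 0 := by
  obtain ⟨⟨i₀, j₀⟩, hmax⟩ :=
    Finite.exists_max fun p : Fin (m + 1) × Fin (m + 1) => weight v γ X p.1 p.2
  have hmax0 : weight v γ X i₀ j₀ ≠ 0 := by
    obtain ⟨i, j, hij⟩ : ∃ i j, X i j ≠ 0 := by
      by_contra! h
      exact hX0 (Matrix.ext h)
    refine ne_zero_of_lt ((zero_lt_iff.2 ?_).trans_le (hmax (i, j)))
    simp [weight, hij, hγ]
  let σ : Equiv.Perm (Fin (m + 1)) := Equiv.addRight (i₀ - j₀)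
  have weight_σ (j : Fin (m + 1)) : weight v γ X (σ j) j = weight v γ X i₀ j₀ := by
    have h := weight_add_add hγ hvt hvτ hX i₀ j₀ (j - j₀)
    rwa [add_sub_cancel, add_sub_left_comm] at h
  have v_apply (i j : Fin (m + 1)) :
      v (X i j) = weight v γ X i j * γ ^ (i : ℕ) * (γ ^ (j : ℕ))⁻¹ := by
    simp [weight, hγ]
  have weight_lt (i j : Fin (m + 1)) (hij : i ≠ σ j) : weight v γ X i j < weight v γ X i₀ j₀ :=
    (hmax (i, j)).lt_of_ne fun h =>
      hij (eq_of_weight_eq_weight hγ hram (h.trans (weight_σ j).symm) (h.trans_ne hmax0))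
  have γ_pow_ne_zero (k : ℕ) : γ ^ k ≠ 0 := pow_ne_zero k hγ
  have hdet : v X.det = ∏ j, v (X (σ j) j) := by
    refine valuation_det_eq_prod v
      (a := fun i : Fin (m + 1) => weight v γ X i₀ j₀ * γ ^ (i : ℕ))
      (b := fun j : Fin (m + 1) => (γ ^ (j : ℕ))⁻¹) (fun i => mul_ne_zero hmax0 (γ_pow_ne_zero i))
      (fun j => inv_ne_zero (γ_pow_ne_zero j)) σ (fun j => by rw [v_apply, weight_σ])
      fun i j hij => ?_
    rw [v_apply]
    exact mul_lt_mul_of_pos_right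
      (mul_lt_mul_of_pos_right (weight_lt i j hij) (zero_lt_iff.2 (γ_pow_ne_zero i)))
      (zero_lt_iff.2 (inv_ne_zero (γ_pow_ne_zero j)))
  rw [← v.ne_zero_iff, hdet]
  refine Finset.prod_ne_zero_iff.2 fun j _ => ?_
  simp [v_apply, weight_σ, hmax0, hγ]

end Valuation

section Span

variable {L K : Type*} [CommRing L] [Field K] [Algebra L K] {m : ℕ} {τ : K →ₐ[L] K} {t : K}

theorem span_eq_top (ht0 : t ≠ 0) (ht : τ t = t) {x : Fin (m + 1) → K}
    (hx : ∀ i, τ (x i) = x (i + 1)) (hinj : Function.Injective x) :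
    Submodule.span K (cyclicAlgebra m τ t : Set (Matrix (Fin (m + 1)) (Fin (m + 1)) K)) = ⊤ := by
  let S := Algebra.adjoin K (cyclicAlgebra m τ t : Set (Matrix (Fin (m + 1)) (Fin (m + 1)) K))
  have hS : Subalgebra.toSubmodule S =
      Submodule.span K (cyclicAlgebra m τ t : Set (Matrix (Fin (m + 1)) (Fin (m + 1)) K)) := by
    rw [Algebra.adjoin_eq_span]
    congr 1
    exact congrArg SetLike.coe
      (Submonoid.closure_eq (cyclicAlgebra m τ t).toSubsemiring.toSubmonoid)
  have single_diag_mem (i) : Matrix.single i i 1 ∈ S :=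
    single_diag_mem_of_diagonal_mem hinj (Algebra.subset_adjoin (diagonal_mem hx)) i
  have single_succ_mem (i : Fin (m + 1)) : Matrix.single i (i + 1) 1 ∈ S := by
    have hprod : Matrix.single i i 1 * cyclicShift m t =
        Matrix.single i (i + 1) (if i = Fin.last m then t else 1) := by
      ext a b
      rcases eq_or_ne a i with rfl | ha
      · simp [cyclicShift, Matrix.single_apply, eq_comm]
      · simp [ha, ha.symm]
    have h := S.smul_mem (S.mul_mem (single_diag_mem i)
      (Algebra.subset_adjoin (cyclicShift_mem ht))) (if i = Fin.last m then t else 1)⁻¹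
    rw [hprod, Matrix.smul_single, smul_eq_mul] at h
    rwa [inv_mul_cancel₀ (by split_ifs <;> simp [ht0])] at h
  have single_add_mem (i a : Fin (m + 1)) : Matrix.single i (i + a) 1 ∈ S := by
    induction a using Fin.induction with
    | zero => simpa using single_diag_mem i
    | succ a ih =>
      rw [← Fin.coeSucc_eq_succ, ← add_assoc]
      simpa using S.mul_mem ih (single_succ_mem (i + a.castSucc))
  rw [← hS, eq_top_iff]
  intro X _
  rw [Matrix.matrix_eq_sum_single X]
  refine Submodule.sum_mem _ fun i _ => Submodule.sum_mem _ fun j _ => ?_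
  have h := S.smul_mem (single_add_mem i (j - i)) (X i j)
  rwa [add_sub_cancel, Matrix.smul_single, smul_eq_mul, mul_one] at h

end Span

end cyclicAlgebra

section Fields

variable (F : Type*) [Field F]

/-- The action of permutations of the variables on the field of rational functions. The cyclic
rotation of `m + 1` variables gives the automorphism `τ` of the cyclic algebra. -/
noncomputable def permVariables (ι : Type*) :
    Equiv.Perm ι →*
      FractionRing (MvPolynomial ι F) ≃ₐ[F] FractionRing (MvPolynomial ι F) :=
  (IsFractionRing.fieldEquivOfAlgEquivHom F (FractionRing (MvPolynomial ι F))).comp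
    { toFun := MvPolynomial.renameEquiv F
      map_one' := MvPolynomial.renameEquiv_refl F
      map_mul' := fun e e' => (MvPolynomial.renameEquiv_trans F e' e).symm }

theorem permVariables_X {ι : Type*} (e : Equiv.Perm ι) (i : ι) :
    permVariables F ι e (algebraMap (MvPolynomial ι F) _ (MvPolynomial.X i)) =
      algebraMap (MvPolynomial ι F) _ (MvPolynomial.X (e i)) := by
  refine (IsFractionRing.fieldEquivOfAlgEquiv_algebraMap F
    (FractionRing (MvPolynomial ι F)) (FractionRing (MvPolynomial ι F)) _ _).trans ?_
  exact congrArg _ (MvPolynomial.rename_X e i)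

/-- The action of automorphisms of `E` on the coefficients of rational functions over `E`. It
extends an automorphism of `E` so as to fix the variable, which plays the role of `t` in the cyclic
algebra. -/
noncomputable def mapCoeffs (E : Type*) [Field E] [Algebra F E] :
    (E ≃ₐ[F] E) →* (RatFunc E ≃ₐ[F] RatFunc E) :=
  (IsFractionRing.fieldEquivOfAlgEquivHom F (RatFunc E)).comp
    { toFun := Polynomial.mapAlgEquiv
      map_one' := by ext p; simp
      map_mul' := fun e e' => by ext p; simp }

variable {F} {E : Type*} [Field E] [Algebra F E]

theorem mapCoeffs_algebraMap (σ : E ≃ₐ[F] E) (p : Polynomial E) :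
    mapCoeffs F E σ (algebraMap _ _ p) = algebraMap _ _ (p.map (σ : E →+* E)) :=
  IsFractionRing.fieldEquivOfAlgEquiv_algebraMap F _ _ _ p

theorem mapCoeffs_C (σ : E ≃ₐ[F] E) (a : E) :
    mapCoeffs F E σ (RatFunc.C a) = RatFunc.C (σ a) := by
  rw [← RatFunc.algebraMap_C, mapCoeffs_algebraMap, Polynomial.map_C, RatFunc.algebraMap_C]
  rfl

theorem mapCoeffs_X (σ : E ≃ₐ[F] E) : mapCoeffs F E σ RatFunc.X = RatFunc.X := by
  rw [← RatFunc.algebraMap_X, mapCoeffs_algebraMap, Polynomial.map_X]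

theorem inftyValuation_mapCoeffs [DecidableEq (RatFunc E)] (σ : E ≃ₐ[F] E) (y : RatFunc E) :
    RatFunc.inftyValuation E (mapCoeffs F E σ y) = RatFunc.inftyValuation E y := by
  have hpoly (p : Polynomial E) : RatFunc.inftyValuation E (algebraMap _ _ (p.map (σ : E →+* E))) =
      RatFunc.inftyValuation E (algebraMap _ _ p) := by
    rcases eq_or_ne p 0 with rfl | hp
    · simp
    · have hp' : p.map (σ : E →+* E) ≠ 0 := (Polynomial.map_ne_zero_iff σ.injective).2 hp
      rw [RatFunc.inftyValuation_apply, RatFunc.inftyValuation_apply,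
        RatFunc.inftyValuation.polynomial _ hp, RatFunc.inftyValuation.polynomial _ hp',
        Polynomial.natDegree_map]
  obtain ⟨p, q, -, rfl⟩ := IsFractionRing.div_surjective (A := Polynomial E) y
  rw [map_div₀, map_div₀, map_div₀, mapCoeffs_algebraMap, mapCoeffs_algebraMap, hpoly, hpoly]

end Fields

theorem finiteDimensional_fixedField_zpowers {F K : Type*} [Field F] [Field K] [Algebra F K]
    {τ : K ≃ₐ[F] K} (hτ : IsOfFinOrder τ) :
    FiniteDimensional (IntermediateField.fixedField (Subgroup.zpowers τ)) K := by
  have : Finite (Subgroup.zpowers τ) := Set.finite_coe_iff.2 (finite_zpowers.2 hτ)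
  exact inferInstanceAs (FiniteDimensional (FixedPoints.subfield (Subgroup.zpowers τ) K) K)

theorem mem_fixedField_zpowers_iff {F K : Type*} [Field F] [Field K] [Algebra F K]
    {τ : K ≃ₐ[F] K} {x : K} :
    x ∈ IntermediateField.fixedField (Subgroup.zpowers τ) ↔ τ x = x := by
  rw [IntermediateField.mem_fixedField_iff]
  refine ⟨fun h => h τ (Subgroup.mem_zpowers τ), fun h f hf => ?_⟩
  have hle : Subgroup.zpowers τ ≤ MulAction.stabilizer (K ≃ₐ[F] K) x :=
    Subgroup.zpowers_le.2 h
  exact hle hf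

theorem isOfFinOrder_mapCoeffs_permVariables (F : Type*) [Field F] {ι : Type*} [Finite ι]
    (e : Equiv.Perm ι) : IsOfFinOrder (mapCoeffs F _ (permVariables F ι e)) :=
  ((mapCoeffs F _).comp (permVariables F ι)).isOfFinOrder (isOfFinOrder_of_finite e)

theorem infinite_of_mem_of_one_lt {K Γ₀ : Type*} [Field K] [LinearOrderedCommGroupWithZero Γ₀]
    {S : Type*} [SetLike S K] [SubmonoidClass S K] (v : Valuation K Γ₀) {L : S} {t : K}
    (ht : t ∈ L) (hvt : 1 < v t) : Infinite L :=
  Infinite.of_injective (fun a : ℕ => (⟨t, ht⟩ : L) ^ a) fun a b hab =>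
    pow_right_injective₀ (zero_lt_one.trans hvt) hvt.ne' <| by
      simpa using congrArg (fun y : L => v y) hab

theorem pow_succ_ne_exp_one_pow {m k : ℕ} (hk : k ∈ Set.Icc 1 m)
    (g : WithZero (Multiplicative ℤ)) : g ^ (m + 1) ≠ WithZero.exp 1 ^ k := by
  intro h
  have hlog : ((m + 1 : ℕ) : ℤ) * WithZero.log g = k := by
    simpa using congrArg WithZero.log h
  exact absurd (Nat.le_of_dvd hk.1 (Int.natCast_dvd_natCast.1 ⟨_, hlog.symm⟩))
    (Nat.not_le.2 (Nat.lt_succ_of_le hk.2))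

theorem exists_division_subalgebra_matrix.{u} (F : Type u) [Field F] (m : ℕ) :
    ∃ (K : Type u) (_ : Field K) (_ : Algebra F K) (L : IntermediateField F K)
      (D : Subalgebra L (Matrix (Fin (m + 1)) (Fin (m + 1)) K)),
      Infinite L ∧ FiniteDimensional L K ∧ (∀ X ∈ D, X ≠ 0 → X.det ≠ 0) ∧
        Submodule.span K (D : Set (Matrix (Fin (m + 1)) (Fin (m + 1)) K)) = ⊤ := by
  classical
  let E := FractionRing (MvPolynomial (Fin (m + 1)) F)
  let σ : RatFunc E ≃ₐ[F] RatFunc E :=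
    mapCoeffs F E (permVariables F (Fin (m + 1)) (Equiv.addRight 1))
  let L := IntermediateField.fixedField (Subgroup.zpowers σ)
  let τ : RatFunc E →ₐ[L] RatFunc E :=
    { (σ : RatFunc E →+* RatFunc E) with
      commutes' := fun c => mem_fixedField_zpowers_iff.1 c.2 }
  let t : RatFunc E := RatFunc.X
  have hτt : τ t = t := mapCoeffs_X _
  let x (i : Fin (m + 1)) : RatFunc E :=
    RatFunc.C (algebraMap (MvPolynomial (Fin (m + 1)) F) E (MvPolynomial.X i))
  have hτx (i : Fin (m + 1)) : τ (x i) = x (i + 1) :=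
    (mapCoeffs_C _ _).trans (congrArg RatFunc.C (permVariables_X F (Equiv.addRight 1) i))
  have hx : Function.Injective x := RatFunc.C_injective.comp <|
    (IsFractionRing.injective (MvPolynomial (Fin (m + 1)) F) E).comp MvPolynomial.X_injective
  -- The power `m + 1` makes `exp 1` an `(m + 1)`-st root of the value of `t`, while all values of
  -- `v` remain `(m + 1)`-st powers.
  let v : Valuation (RatFunc E) (WithZero (Multiplicative ℤ)) :=
    (RatFunc.inftyValuation E).map (powMonoidWithZeroHom m.succ_ne_zero)
      fun _ _ h => pow_le_pow_left' h _
  have v_apply (y : RatFunc E) : v y = RatFunc.inftyValuation E y ^ (m + 1) := rfl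
  have hvt : v t = WithZero.exp 1 ^ (m + 1) := by rw [v_apply, RatFunc.inftyValuation.X]
  have hvτ (y : RatFunc E) : v (τ y) = v y :=
    congrArg (· ^ (m + 1)) (inftyValuation_mapCoeffs _ y)
  have hram (y : RatFunc E) : ∀ k ∈ Set.Icc 1 m, v y ≠ WithZero.exp 1 ^ k :=
    fun k hk => pow_succ_ne_exp_one_pow hk _
  refine ⟨RatFunc E, inferInstance, inferInstance, L, cyclicAlgebra m τ t, ?_, ?_,
    fun X => cyclicAlgebra.det_ne_zero WithZero.exp_ne_zero hram hvt hvτ,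
    cyclicAlgebra.span_eq_top RatFunc.X_ne_zero hτt hτx hx⟩
  · refine infinite_of_mem_of_one_lt v (mem_fixedField_zpowers_iff.2 hτt) ?_
    rw [hvt]
    refine one_lt_pow₀ ?_ m.succ_ne_zero
    rw [← WithZero.exp_zero, WithZero.exp_lt_exp]
    exact one_pos
  · exact finiteDimensional_fixedField_zpowers (isOfFinOrder_mapCoeffs_permVariables F _)

section BlowUp

variable {F : Type} [Field F] {n k ℓ : ℕ} {B : Submodule F (Matrix (Fin n) (Fin n) F)}

theorem kronecker_mem_blowUp {A : Matrix (Fin n) (Fin n) F} (hA : A ∈ B)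
    (T : Matrix (Fin k) (Fin ℓ) F) : A ⊗ₖ T ∈ blowUp B k ℓ :=
  Submodule.subset_span ⟨A, hA, T, rfl⟩

theorem submatrix_mem_blowUp {k' ℓ' : ℕ} {A : Matrix (Fin n × Fin k) (Fin n × Fin ℓ) F}
    (hA : A ∈ blowUp B k ℓ) (r : Fin k' → Fin k) (c : Fin ℓ' → Fin ℓ) :
    A.submatrix (Prod.map id r) (Prod.map id c) ∈ blowUp B k' ℓ' := by
  induction hA using Submodule.span_induction with
  | mem M hM =>
    obtain ⟨A, hA, T, rfl⟩ := hM
    exact kronecker_mem_blowUp hA (T.submatrix r c)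
  | zero => exact Submodule.zero_mem _
  | add M N _ _ hM hN => exact Submodule.add_mem _ hM hN
  | smul a M _ hM => exact Submodule.smul_mem _ a hM

/-- The Kronecker products of the elements of `B`, with scalars extended to `K`, and the elements of
`S`. Their span over a subfield of `K` replaces the blow-up when the second factor is restricted to
`S`. -/
def kroneckerSet {K : Type*} [Field K] [Algebra F K] (B : Submodule F (Matrix (Fin n) (Fin n) F))
    (S : Set (Matrix (Fin k) (Fin ℓ) K)) : Set (Matrix (Fin n × Fin k) (Fin n × Fin ℓ) K) :=
  Set.image2 (fun (A : Matrix (Fin n) (Fin n) F) T => A.map (algebraMap F K) ⊗ₖ T)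
    (B : Set (Matrix (Fin n) (Fin n) F)) S

theorem span_kroneckerSet_congr {K : Type*} [Field K] [Algebra F K]
    {S S' : Set (Matrix (Fin k) (Fin ℓ) K)} (h : Submodule.span K S = Submodule.span K S') :
    Submodule.span K (kroneckerSet B S) = Submodule.span K (kroneckerSet B S') := by
  have hmap₂ (S : Set (Matrix (Fin k) (Fin ℓ) K)) : Submodule.span K (kroneckerSet B S) =
      Submodule.map₂ (Matrix.kroneckerBilinear (R := K)) (Submodule.span K
        ((fun A => A.map (algebraMap F K)) '' (B : Set (Matrix (Fin n) (Fin n) F))))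
        (Submodule.span K S) := by
    rw [Submodule.map₂_span_span, Set.image2_image_left]
    rfl
  rw [hmap₂, hmap₂, h]

theorem map_blowUp (K : Type*) [Field K] [Algebra F K] :
    (blowUp B k ℓ).map (Algebra.linearMap F K).mapMatrix =
      Submodule.span F (kroneckerSet B
        (Set.range fun T : Matrix (Fin k) (Fin ℓ) F => T.map (algebraMap F K))) := by
  rw [blowUp, Submodule.map_span]
  congr 1
  ext M
  constructor
  · rintro ⟨_, ⟨A, hA, T, rfl⟩, rfl⟩
    exact ⟨A, hA, _, ⟨T, rfl⟩, by ext; simp⟩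
  · rintro ⟨A, hA, _, ⟨T, rfl⟩, rfl⟩
    exact ⟨_, ⟨A, hA, T, rfl⟩, by ext; simp⟩

theorem span_map_blowUp_eq {K : Type*} [Field K] [Algebra F K] {S : Set (Matrix (Fin k) (Fin ℓ) K)}
    (hS : Submodule.span K S = ⊤) :
    Submodule.span K ((blowUp B k ℓ).map (Algebra.linearMap F K).mapMatrix : Set (Matrix _ _ K)) =
      Submodule.span K (kroneckerSet B S) := by
  rw [map_blowUp, Submodule.span_span_of_tower]
  exact span_kroneckerSet_congr ((span_range_map_algebraMap F K).trans hS.symm)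

theorem exists_comp_map_val_of_mem_span_kroneckerSet {K : Type*} [Field K] [Algebra F K]
    {L : IntermediateField F K} {D : Subalgebra L (Matrix (Fin k) (Fin k) K)}
    {M : Matrix (Fin n × Fin k) (Fin n × Fin k) K}
    (hM : M ∈ Submodule.span L (kroneckerSet B (D : Set (Matrix (Fin k) (Fin k) K)))) :
    ∃ N : Matrix (Fin n) (Fin n) D, Matrix.comp _ _ _ _ K (N.map D.val) = M := by
  induction hM using Submodule.span_induction with
  | mem M hM =>
    obtain ⟨A, -, X, hX, rfl⟩ := hM
    exact ⟨Matrix.of fun i j => algebraMap F L (A i j) • (⟨X, hX⟩ : D), rfl⟩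
  | zero => exact ⟨0, rfl⟩
  | add M M' _ _ hM hM' =>
    obtain ⟨N, rfl⟩ := hM
    obtain ⟨N', rfl⟩ := hM'
    exact ⟨N + N', rfl⟩
  | smul c M _ hM =>
    obtain ⟨N, rfl⟩ := hM
    exact ⟨c • N, rfl⟩

theorem dvd_rank_of_forall_rank_le (hF : ((n * k : ℕ) : Cardinal) < Cardinal.mk F)
    {A : Matrix (Fin n × Fin k) (Fin n × Fin k) F} (hA : A ∈ blowUp B k k)
    (hmax : ∀ M ∈ blowUp B k k, M.rank ≤ A.rank) : k ∣ A.rank := by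
  obtain _ | m := k
  · simpa using A.rank_le_card_width
  obtain ⟨K, _, _, L, D, _, _, hdet, hspan⟩ := exists_division_subalgebra_matrix F m
  let V := (blowUp B (m + 1) (m + 1)).map (Algebra.linearMap F K).mapMatrix
  let W := Submodule.span L (kroneckerSet B (D : Set (Matrix (Fin (m + 1)) (Fin (m + 1)) K)))
  have span_V_eq_span_W : Submodule.span K (SetLike.coe V) = Submodule.span K (SetLike.coe W) :=
    (span_map_blowUp_eq hspan).trans (Submodule.span_span_of_tower ..).symm
  obtain ⟨M, hMW, hAM⟩ : ∃ M ∈ W, (A.map (algebraMap F K)).rank ≤ M.rank := by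
    refine exists_mem_rank_le_of_mem_span
      (Cardinal.natCast_lt_aleph0.trans_le (Cardinal.aleph0_le_mk L)) ?_
    rw [← span_V_eq_span_W]
    exact Submodule.subset_span (Submodule.mem_map_of_mem hA)
  obtain ⟨_, ⟨A', hA', rfl⟩, hMA'⟩ : ∃ A' ∈ V, M.rank ≤ A'.rank := by
    refine exists_mem_rank_le_of_mem_span (lt_of_le_of_lt ?_ hF) ?_
    · exact_mod_cast M.rank_le_card_width.trans_eq (by simp)
    · rw [span_V_eq_span_W]
      exact Submodule.subset_span hMW
  have rank_M_eq : M.rank = A.rank :=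
    le_antisymm (hMA'.trans ((rank_map_eq_rank (algebraMap F K) A').trans_le (hmax A' hA')))
      ((rank_map_eq_rank (algebraMap F K) A).symm.trans_le hAM)
  obtain ⟨N, rfl⟩ := exists_comp_map_val_of_mem_span_kroneckerSet hMW
  have hdvd := card_dvd_rank_comp_map_val hdet N
  rwa [rank_M_eq, Fintype.card_fin] at hdvd

end BlowUp

/-- Blow-up size reduction: for all positive `n, d` there is `N` such that over any field
`F` with `|F| ≥ N`, if `d > n + 1` and the `(d,d)`-blow-up of `B ≤ M(n,F)` contains a
matrix of rank `d·n`, then the `(d−1,d−1)`-blow-up contains a matrix of rank `(d−1)·n`. -/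
theorem stmt12 (n d : ℕ) (hn : 0 < n) (hd : 0 < d) :
    ∃ N : ℕ, ∀ (F : Type) (_ : Field F),
      (N : Cardinal) ≤ Cardinal.mk F →
      ∀ (B : Submodule F (Matrix (Fin n) (Fin n) F)),
        n + 1 < d →
        (∃ A ∈ blowUp B d d, A.rank = d * n) →
        ∃ A' ∈ blowUp B (d - 1) (d - 1), A'.rank = (d - 1) * n := by
  refine ⟨n * (d - 1) + 1, ?_⟩
  rintro F _ hF B hnd ⟨A, hA, hrank⟩
  obtain ⟨k, rfl⟩ : ∃ k, d = k + 1 := ⟨d - 1, by omega⟩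
  rw [Nat.add_sub_cancel] at hF ⊢
  obtain ⟨A', hA', hmax⟩ := exists_forall_rank_le (blowUp B k k).nonempty
  refine ⟨A', hA', ?_⟩
  have hle : A'.rank ≤ k * n := by simpa [mul_comm] using A'.rank_le_card_width
  obtain ⟨c, hc⟩ := dvd_rank_of_forall_rank_le (Order.succ_le_iff.1 (by exact_mod_cast hF)) hA' hmax
  have hinj : Function.Injective (Prod.map (id : Fin n → Fin n) (Fin.castSucc (n := k))) :=
    Function.injective_id.prodMap (Fin.castSucc_injective k)
  have hdel := rank_add_card_add_card_le A hinj hinj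
  have hsub := hmax _ (submatrix_mem_blowUp hA Fin.castSucc Fin.castSucc)
  simp only [Fintype.card_prod, Fintype.card_fin, hrank] at hdel
  rw [hc] at hle hsub ⊢
  have hc_le : c ≤ n := Nat.le_of_mul_le_mul_left hle (by omega)
  have hn_le : n ≤ c := by
    by_contra! hcn
    nlinarith [Nat.mul_le_mul_left k (Nat.succ_le_iff.2 hcn)]
  rw [hc_le.antisymm hn_le]
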